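/- Let g be a Lie algebra acting on ℂ[[t₁,…,tₙ]]-valued formal differential forms Ω^p via Lie derivative. For each i ≥ 1, the cochain a_i ∈ C^{2i−1}(vect(n); O) defined by a_i(X₁,…,X_{2i−1}) = alternation of Tr(JX₁ ⋯ JX_{2i−1}), where JX denotes the formal Jacobian matrix with entries in ℂ[[t₁,…,tₙ]], is a Chevalley–Eilenberg cocycle of degree 2i−1 with coefficients in O = ℂ[[t₁,…,tₙ]]. -/

import Mathlib

/- STATEMENT 8: For each i ≥ 1, the cochain aᵢ ∈ C^{2i−1}(vect(n); O) given by the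
alternation of (X₁,…,X_{2i−1}) ↦ Tr(JX₁ ⋯ JX_{2i−1}) is a Chevalley–Eilenberg cocycle of
degree 2i−1 with coefficients in O = ℂ[[t₁,…,tₙ]] (vect(n) acting by derivations). -/

open MvPowerSeries

/-- O = ℂ[[t₁,…,tₙ]] -/
abbrev O (n : ℕ) := MvPowerSeries (Fin n) ℂ

/-- partial derivative ∂ᵢ on formal power series, defined coefficientwise -/
noncomputable def pd {n : ℕ} (i : Fin n) (f : O n) : O n :=
  fun m => ((m i : ℂ) + 1) * f (m + Finsupp.single i 1)

/-- vect(n): formal vector fields X = Σᵢ fᵢ∂ᵢ recorded by their coefficient tuples -/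
abbrev Vn (n : ℕ) := Fin n → O n

/-- the Lie bracket of formal vector fields -/
noncomputable def br {n : ℕ} (X Y : Vn n) : Vn n :=
  fun j => ∑ i, (X i * pd i (Y j) - Y i * pd i (X j))

/-- the action of a formal vector field on O by derivation, X·f = Σᵢ fᵢ ∂ᵢf -/
noncomputable def act {n : ℕ} (X : Vn n) (f : O n) : O n := ∑ i, X i * pd i f

/-- the formal Jacobian J : vect(n) → gl(n, O), (JX)ᵢⱼ = ∂ᵢfⱼ -/
noncomputable def Jac {n : ℕ} (X : Vn n) : Matrix (Fin n) (Fin n) (O n) :=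
  fun i j => pd i (X j)

/-- the Chevalley–Eilenberg differential on cochains of vect(n) with values in O, the module
action being act: (dφ)(X₀,…,X_k) = Σᵢ (−1)ⁱ Xᵢ·φ(…,X̂ᵢ,…) + Σ_{i<j} (−1)^{i+j} φ(⁅Xᵢ,Xⱼ⁆,…). -/
noncomputable def dCEO {n : ℕ} : ∀ {k : ℕ}, ((Fin k → Vn n) → O n) → ((Fin (k + 1) → Vn n) → O n)
  | 0, φ => fun x => act (x 0) (φ ![])
  | (k + 1), φ => fun x =>
      (∑ i : Fin (k + 2), ((-1 : ℤ) ^ (i : ℕ)) • act (x i) (φ (i.removeNth x)))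
      + ∑ i : Fin (k + 2), ∑ j : Fin (k + 2),
          if _h : i < j then
            ((-1 : ℤ) ^ ((i : ℕ) + (j : ℕ))) •
              φ (Fin.cons (br (x i) (x j))
                ((⟨i, by omega⟩ : Fin (k + 1)).removeNth (j.removeNth x)))
          else 0

/-- the cochain aᵢ : the alternation of (X₁,…,X_{2i−1}) ↦ Tr(JX₁ ⋯ JX_{2i−1}) -/
noncomputable def aCochain {n : ℕ} (i : ℕ) : (Fin (2 * i - 1) → Vn n) → O n :=
  fun X => ∑ σ : Equiv.Perm (Fin (2 * i - 1)),
    (Equiv.Perm.sign σ : ℤ) • Matrix.trace (List.ofFn (fun k => Jac (X (σ k)))).prod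

lemma h_pd_eq {n : ℕ} (i : Fin n) (f : O n) : pd i f = MvPowerSeries.pderiv ℂ i f := by
  ext m
  rw [MvPowerSeries.coeff_pderiv, mul_comm]
  rfl

noncomputable def actD {n : ℕ} (X : Vn n) : Derivation ℂ (O n) (O n) :=
  ∑ i, X i • MvPowerSeries.pderiv ℂ i

lemma act_eq {n : ℕ} (X : Vn n) (f : O n) : act X f = actD X f := by
  simp only [act, actD, h_pd_eq]
  rw [← Derivation.coeFnAddMonoidHom_apply, map_sum, Finset.sum_apply]
  rfl

lemma pd_comm {n : ℕ} (i j : Fin n) (f : O n) : pd i (pd j f) = pd j (pd i f) := by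
  ext m
  simp only [h_pd_eq, MvPowerSeries.coeff_pderiv]
  rw [add_right_comm]
  by_cases h : i = j
  · subst h; rfl
  · simp [h, Ne.symm h]
    ring_nf

noncomputable def mact {n : ℕ} (X : Vn n) (A : Matrix (Fin n) (Fin n) (O n)) :
    Matrix (Fin n) (Fin n) (O n) := A.map (actD X)

lemma mact_mul {n : ℕ} (X : Vn n) (A B : Matrix (Fin n) (Fin n) (O n)) :
    mact X (A * B) = mact X A * B + A * mact X B := by
  refine Matrix.ext fun i j => ?_
  simp only [mact, Matrix.map_apply, Matrix.mul_apply, Matrix.add_apply, map_sum,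
    Derivation.leibniz, smul_eq_mul, ← Finset.sum_add_distrib]
  refine Finset.sum_congr rfl fun k _ => ?_
  ring

lemma mact_one {n : ℕ} (X : Vn n) : mact X 1 = 0 := by
  refine Matrix.ext fun i j => ?_
  simp only [mact, Matrix.map_apply, Matrix.one_apply, Matrix.zero_apply]
  split_ifs <;> simp

lemma actD_trace {n : ℕ} (X : Vn n) (A : Matrix (Fin n) (Fin n) (O n)) :
    actD X (Matrix.trace A) = Matrix.trace (mact X A) := by
  simp [Matrix.trace, mact]

lemma mact_prod {n m : ℕ} (X : Vn n) (B : Fin m → Matrix (Fin n) (Fin n) (O n)) :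
    mact X (List.ofFn B).prod =
      ∑ j, (List.ofFn (Function.update B j (mact X (B j)))).prod := by
  induction m with
  | zero => simp [mact_one]
  | succ m ih =>
    rw [List.ofFn_succ, List.prod_cons, mact_mul, ih, Fin.sum_univ_succ, Finset.mul_sum]
    congr 1
    · simp [List.ofFn_succ]
    · refine Finset.sum_congr rfl fun j _ => ?_
      rw [List.ofFn_succ, List.prod_cons, Function.update_of_ne (Fin.succ_ne_zero j).symm]
      congr 3
      funext k
      by_cases h : k = j
      · subst h; simp
      · simp [h]

lemma Jac_br {n : ℕ} (X Y : Vn n) :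
    Jac (br X Y) = (Jac X * Jac Y + mact X (Jac Y)) - (Jac Y * Jac X + mact Y (Jac X)) := by
  refine Matrix.ext fun k l => ?_
  simp only [Matrix.sub_apply, Matrix.add_apply, Matrix.mul_apply, mact, Matrix.map_apply,
    ← act_eq, act, Jac, br, ← Finset.sum_add_distrib, ← Finset.sum_sub_distrib]
  rw [h_pd_eq, map_sum]
  refine Finset.sum_congr rfl (fun i _ => ?_)
  rw [map_sub, Derivation.leibniz, Derivation.leibniz, ← h_pd_eq, ← h_pd_eq, ← h_pd_eq, ← h_pd_eq,
    pd_comm k i, pd_comm k i]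
  simp only [smul_eq_mul]
  ring

/-! Alternation -/

def altS {V R : Type*} [AddCommGroup R] {m : ℕ} (G : (Fin m → V) → R) (x : Fin m → V) : R :=
  ∑ σ : Equiv.Perm (Fin m), (Equiv.Perm.sign σ : ℤ) • G (fun k => x (σ k))

section
variable {V R : Type*} [AddCommGroup R] {m : ℕ}

lemma altS_add (G H : (Fin m → V) → R) (x : Fin m → V) :
    altS (fun x => G x + H x) x = altS G x + altS H x := by
  simp [altS, smul_add, Finset.sum_add_distrib]

lemma altS_sub (G H : (Fin m → V) → R) (x : Fin m → V) :
    altS (fun x => G x - H x) x = altS G x - altS H x := by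
  simp [altS, smul_sub, Finset.sum_sub_distrib]

lemma altS_sum {ι : Type*} (s : Finset ι) (G : ι → (Fin m → V) → R) (x : Fin m → V) :
    altS (fun x => ∑ i ∈ s, G i x) x = ∑ i ∈ s, altS (G i) x := by
  simp only [altS, Finset.smul_sum]
  exact Finset.sum_comm

lemma altS_perm (π : Equiv.Perm (Fin m)) (G : (Fin m → V) → R) (x : Fin m → V) :
    altS (fun x => G (fun k => x (π k))) x = (Equiv.Perm.sign π : ℤ) • altS G x := by
  simp only [altS, Finset.smul_sum]
  refine Fintype.sum_equiv (Equiv.mulRight π) _ _ fun σ => ?_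
  simp only [Equiv.coe_mulRight, Equiv.Perm.mul_apply, smul_smul, Equiv.Perm.sign_mul,
    Units.val_mul]
  congr 1
  rw [mul_comm (_ : ℤ) (_ * _), mul_assoc, ← Units.val_mul, Int.units_mul_self]
  simp

def ePerm (m : ℕ) (q : Fin (m + 1) × Equiv.Perm (Fin m)) : Equiv.Perm (Fin (m + 1)) :=
  q.1.cycleRange.symm * Equiv.Perm.decomposeFin.symm (0, q.2)

lemma ePerm_bij (m : ℕ) : Function.Bijective (ePerm m) := by
  rw [Fintype.bijective_iff_injective_and_card]
  refine ⟨?_, (Fintype.card_congr Equiv.Perm.decomposeFin).symm⟩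
  rintro ⟨p, τ⟩ ⟨p', τ'⟩ h
  have h0 : p = p' := by
    have := congrArg (fun e : Equiv.Perm (Fin (m+1)) => e 0) h
    simpa [ePerm, Equiv.Perm.mul_apply] using this
  subst h0
  have h1 := mul_left_cancel (h : _ * _ = _ * _)
  simpa using h1

lemma altS_succ (G : (Fin (m + 1) → V) → R) (x : Fin (m + 1) → V) :
    altS G x = ∑ p : Fin (m + 1), ((-1 : ℤ) ^ (p : ℕ)) •
      altS (fun z => G (Fin.cons (x p) z)) (p.removeNth x) := by
  simp only [altS, Finset.smul_sum]
  rw [← Fintype.sum_prod_type', ← (ePerm_bij m).sum_comp]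
  refine Finset.sum_congr rfl fun q _ => ?_
  obtain ⟨p, τ⟩ := q
  rw [smul_smul]
  congr 1
  · simp [ePerm, Equiv.Perm.sign_mul]
  · congr 1
    funext k
    refine Fin.cases ?_ (fun k => ?_) k
    · simp [ePerm, Equiv.Perm.mul_apply]
    · simp [ePerm, Equiv.Perm.mul_apply, Fin.removeNth]

lemma sum_lt_eq {k : ℕ} (F : ∀ i j : Fin (k + 2), i < j → R) :
    (∑ i : Fin (k + 2), ∑ j : Fin (k + 2), if h : i < j then F i j h else 0) =
      ∑ i : Fin (k + 1), ∑ j : Fin (k + 1),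
        if h : i ≤ j then F i.castSucc j.succ (Fin.castSucc_lt_succ_iff.2 h) else 0 := by
  rw [Fin.sum_univ_castSucc]
  have : (∑ j : Fin (k + 2), if h : Fin.last (k+1) < j then F (Fin.last _) j h else 0) = 0 := by
    refine Finset.sum_eq_zero fun j _ => ?_
    rw [dif_neg (not_lt.2 (Fin.le_last j))]
  rw [this, add_zero]
  refine Finset.sum_congr rfl fun i _ => ?_
  rw [Fin.sum_univ_succ, dif_neg (by simp), zero_add]
  refine Finset.sum_congr rfl fun j _ => ?_
  simp only [Fin.castSucc_lt_succ_iff]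

lemma altS_succ_succ {k : ℕ} (G : V → V → (Fin k → V) → R) (x : Fin (k + 2) → V) :
    (∑ i : Fin (k + 2), ∑ j : Fin (k + 2),
      if h : i < j then ((-1 : ℤ) ^ ((i : ℕ) + (j : ℕ))) •
        altS (fun z => G (x i) (x j) z - G (x j) (x i) z)
          ((⟨i, by omega⟩ : Fin (k + 1)).removeNth (j.removeNth x)) else 0) =
    - altS (fun y : Fin (k + 2) → V => G (y 0) (y 1) (fun l => y l.succ.succ)) x := by
  rw [sum_lt_eq (F := fun i j h => ((-1 : ℤ) ^ ((i : ℕ) + (j : ℕ))) •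
        altS (fun z => G (x i) (x j) z - G (x j) (x i) z)
          ((⟨i, by omega⟩ : Fin (k + 1)).removeNth (j.removeNth x)))]
  rw [altS_succ]
  simp only [altS_succ (m := k), Finset.smul_sum]
  rw [Fin.sum_sum_eq_sum_triangle_add, ← Finset.sum_neg_distrib]
  refine Finset.sum_congr rfl fun i _ => ?_
  rw [← Finset.sum_neg_distrib]
  have : Finset.Ici i = Finset.univ.filter (fun j => i ≤ j) := by ext; simp
  rw [this, Finset.sum_filter]
  refine Finset.sum_congr rfl fun j _ => ?_
  split_ifs with hj
  · have H₁ : i.castSucc.removeNth x j = x j.succ := by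
      simp [Fin.removeNth_apply, Fin.succAbove_of_le_castSucc, hj]
    have H₂ : j.succ.removeNth x i = x i.castSucc := by
      simp [Fin.removeNth_apply, Fin.succAbove_of_castSucc_lt, hj]
    have H₃ : j.removeNth (i.castSucc.removeNth x) = i.removeNth (j.succ.removeNth x) := by
      rw [Fin.removeNth_removeNth_eq_swap]
      simp [Fin.predAbove, not_lt.2 hj, Fin.succAbove]
    rw [altS_sub, H₁, H₂, H₃]
    have c1 : ∀ a b : V, ∀ z : Fin k → V,
      (Fin.cons a (Fin.cons b z : Fin (k+1) → V) : Fin (k+2) → V) 1 = b := fun _ _ _ => rfl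
    simp only [Fin.cons_zero, Fin.cons_succ, c1, Fin.val_castSucc, Fin.val_succ, smul_smul]
    simp only [Fin.eta, pow_add, pow_one, smul_sub, mul_smul, neg_smul, one_smul, smul_neg, mul_neg, mul_one]
    rw [smul_comm ((-1 : ℤ) ^ (j : ℕ))]
    abel
  · rfl

end

/-! Cyclicity -/

open Fin.NatCast in
lemma rot_pow (m N : ℕ) : (finRotate (m + 1)) ^ N = Equiv.addRight (N : Fin (m + 1)) := by
  induction N with
  | zero => ext; simp
  | succ N ih =>
    ext k
    rw [pow_succ', ih]
    simp [Equiv.Perm.mul_apply, add_assoc]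

lemma rot_eq (m : ℕ) (j : Fin (m + 1)) :
    Equiv.addRight j = (finRotate (m + 1)) ^ (j : ℕ) := by
  rw [rot_pow, Fin.cast_val_eq_self]

lemma sign_rot {m : ℕ} (hm : Even m) (j : Fin (m + 1)) :
    Equiv.Perm.sign (Equiv.addRight j) = 1 := by
  rw [rot_eq, map_pow, sign_finRotate]
  simp [hm.neg_one_pow]

lemma tr_rot1 {n m : ℕ} (B : Fin (m + 1) → Matrix (Fin n) (Fin n) (O n)) :
    Matrix.trace (List.ofFn (fun k => B (finRotate (m + 1) k))).prod
      = Matrix.trace (List.ofFn B).prod := by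
  rw [List.ofFn_succ', List.ofFn_succ (f := B), List.concat_eq_append, List.prod_append,
    List.prod_cons, Matrix.trace_mul_comm]
  simp [finRotate_last]

lemma tr_rot {n m : ℕ} (j : Fin (m + 1)) (B : Fin (m + 1) → Matrix (Fin n) (Fin n) (O n)) :
    Matrix.trace (List.ofFn (fun k => B (k + j))).prod
      = Matrix.trace (List.ofFn B).prod := by
  have key : ∀ N : ℕ, Matrix.trace (List.ofFn (fun k => B (((finRotate (m + 1)) ^ N) k))).prod
      = Matrix.trace (List.ofFn B).prod := by
    intro N
    induction N with
    | zero => simp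
    | succ N ih =>
      rw [← ih, ← tr_rot1 (fun k => B (((finRotate (m + 1)) ^ N) k))]
      simp only [pow_succ, Equiv.Perm.mul_apply]
  have := key j
  rw [← rot_eq] at this
  exact this

def fPerm (m : ℕ) (q : Fin (m + 1) × Equiv.Perm (Fin m)) : Equiv.Perm (Fin (m + 1)) :=
  Equiv.Perm.decomposeFin.symm (0, q.2) * Equiv.addRight q.1

lemma fPerm_bij (m : ℕ) : Function.Bijective (fPerm m) := by
  rw [Fintype.bijective_iff_injective_and_card]
  refine ⟨?_, (Fintype.card_congr Equiv.Perm.decomposeFin).symm⟩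
  rintro ⟨p, τ⟩ ⟨p', τ'⟩ h
  have h0 : p = p' := by
    have h1 := congrArg (fun e : Equiv.Perm (Fin (m+1)) => e (-p)) h
    simp only [fPerm, Equiv.Perm.mul_apply, Equiv.coe_addRight, neg_add_cancel,
      Equiv.Perm.decomposeFin_symm_apply_zero] at h1
    have h2 : Equiv.Perm.decomposeFin.symm (0, τ') 0 =
        Equiv.Perm.decomposeFin.symm (0, τ') (-p + p') := by
      rw [← h1, Equiv.Perm.decomposeFin_symm_apply_zero]
    have h3 := (Equiv.injective _ h2).symm
    exact neg_add_eq_zero.1 h3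
  subst h0
  have h1 := mul_right_cancel (h : _ * _ = _ * _)
  simpa using h1

lemma altS_cons {n k : ℕ} (hk : Even k) (y : Vn n) (z : Fin k → Vn n) :
    altS (fun X : Fin (k + 1) → Vn n => Matrix.trace (List.ofFn (fun l => Jac (X l))).prod)
      (Fin.cons y z : Fin (k + 1) → Vn n) =
    (k + 1) • altS (fun z : Fin k → Vn n =>
      Matrix.trace (Jac y * (List.ofFn (fun l => Jac (z l))).prod)) z := by
  unfold altS
  rw [← (fPerm_bij k).sum_comp, Fintype.sum_prod_type]
  rw [Finset.sum_congr rfl (g := fun _ => altS (fun z : Fin k → Vn n =>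
      Matrix.trace (Jac y * (List.ofFn (fun l => Jac (z l))).prod)) z)]
  · simp [altS]
  · intro j _
    unfold altS
    refine Finset.sum_congr rfl fun τ _ => ?_
    congr 1
    · simp [fPerm, Equiv.Perm.sign_mul, sign_rot hk]
    · simp only [fPerm, Equiv.Perm.mul_apply, Equiv.coe_addRight]
      rw [tr_rot j (fun l => Jac ((Fin.cons y z : Fin (k + 1) → Vn n)
        (Equiv.Perm.decomposeFin.symm (0, τ) l)))]
      simp [List.ofFn_succ]

lemma altS_even {n k : ℕ} (hk : Even k) (x : Fin (k + 2) → Vn n) :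
    altS (fun X : Fin (k + 2) → Vn n => Matrix.trace (List.ofFn (fun l => Jac (X l))).prod) x
      = 0 := by
  have h := altS_perm (finRotate (k + 2))
    (fun X : Fin (k + 2) → Vn n => Matrix.trace (List.ofFn (fun l => Jac (X l))).prod) x
  have h2 : (fun X : Fin (k + 2) → Vn n =>
      Matrix.trace (List.ofFn (fun l => Jac (X (finRotate (k + 2) l)))).prod) =
      (fun X : Fin (k + 2) → Vn n => Matrix.trace (List.ofFn (fun l => Jac (X l))).prod) := by
    funext X
    exact tr_rot1 (fun l => Jac (X l))
  rw [h2, sign_finRotate] at h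
  have h3 : ((-1 : ℤˣ) ^ (k + 2 - 1)) = -1 := by
    have : Odd (k + 1) := hk.add_one
    exact this.neg_one_pow
  rw [h3] at h
  simp only [Units.val_neg, Units.val_one, neg_smul, one_smul] at h
  have h4 := add_eq_zero_iff_eq_neg.2 h
  rw [← two_smul ℂ] at h4
  exact (smul_eq_zero.1 h4).resolve_left two_ne_zero

/-- the j-th Leibniz term -/
noncomputable def EE {n k : ℕ} (j : Fin (k + 1)) (x : Fin (k + 2) → Vn n) : O n :=
  Matrix.trace (List.ofFn (Function.update (fun l : Fin (k + 1) => Jac (x l.succ)) j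
    (mact (x 0) (Jac (x j.succ))))).prod

lemma altS_EE {n k : ℕ} (hk : Even k) (j : Fin (k + 1)) (x : Fin (k + 2) → Vn n) :
    altS (EE j) x = altS (EE 0) x := by
  have h := altS_perm (Equiv.Perm.decomposeFin.symm (0, Equiv.addRight j)) (EE (n := n) (k := k) 0) x
  rw [Equiv.Perm.decomposeFin.symm_sign, if_pos rfl, sign_rot hk] at h
  simp only [mul_one, Units.val_one, one_smul] at h
  rw [← h]
  congr 1
  funext y
  unfold EE
  rw [← tr_rot j]
  congr 3
  funext l
  by_cases hl : l = 0
  · subst hl; simp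
  · simp [hl]

lemma main_even {n k : ℕ} (hk : Even k) :
    dCEO (n := n) (k := k + 1) (fun X => ∑ σ : Equiv.Perm (Fin (k + 1)),
      (Equiv.Perm.sign σ : ℤ) • Matrix.trace (List.ofFn (fun l => Jac (X (σ l)))).prod) = 0 := by
  funext x
  change (∑ i : Fin (k + 2), ((-1 : ℤ) ^ (i : ℕ)) • act (x i)
      (altS (fun X : Fin (k + 1) → Vn n => Matrix.trace (List.ofFn (fun l => Jac (X l))).prod)
        (i.removeNth x)))
      + (∑ i : Fin (k + 2), ∑ j : Fin (k + 2),
          if _h : i < j then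
            ((-1 : ℤ) ^ ((i : ℕ) + (j : ℕ))) •
              altS (fun X : Fin (k + 1) → Vn n =>
                  Matrix.trace (List.ofFn (fun l => Jac (X l))).prod)
                (Fin.cons (br (x i) (x j))
                ((⟨i, by omega⟩ : Fin (k + 1)).removeNth (j.removeNth x)))
          else 0) = 0
  have A : (∑ i : Fin (k + 2), ((-1 : ℤ) ^ (i : ℕ)) • act (x i)
      (altS (fun X : Fin (k + 1) → Vn n => Matrix.trace (List.ofFn (fun l => Jac (X l))).prod)
        (i.removeNth x))) = (k + 1) • altS (EE 0) x := by
    have h1 : altS (fun x : Fin (k + 2) → Vn n => ∑ j, EE j x) x = (k + 1) • altS (EE 0) x := by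
      rw [altS_sum]
      simp [altS_EE hk]
    rw [← h1, altS_succ]
    refine Finset.sum_congr rfl fun p _ => ?_
    congr 1
    rw [act_eq]
    unfold altS
    rw [map_sum]
    refine Finset.sum_congr rfl fun σ _ => ?_
    rw [map_zsmul, actD_trace, mact_prod, Matrix.trace_sum]
    rfl
  have B := altS_succ_succ (fun X Y (z : Fin k → Vn n) => (k + 1) •
    Matrix.trace ((Jac X * Jac Y + mact X (Jac Y)) * (List.ofFn (fun l => Jac (z l))).prod)) x
  have C : ∀ (X Y : Vn n) (w : Fin k → Vn n),
      altS (fun X : Fin (k + 1) → Vn n => Matrix.trace (List.ofFn (fun l => Jac (X l))).prod)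
        (Fin.cons (br X Y) w : Fin (k + 1) → Vn n) =
      altS (fun z : Fin k → Vn n => (k + 1) •
    Matrix.trace ((Jac X * Jac Y + mact X (Jac Y)) * (List.ofFn (fun l => Jac (z l))).prod)
      - (k + 1) •
    Matrix.trace ((Jac Y * Jac X + mact Y (Jac X)) * (List.ofFn (fun l => Jac (z l))).prod)) w := by
    intro X Y w
    rw [altS_cons hk, Jac_br]
    simp only [sub_mul, Matrix.trace_sub, ← smul_sub]
    unfold altS
    rw [Finset.smul_sum]
    exact Finset.sum_congr rfl fun σ _ => smul_comm _ _ _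
  simp only [C]
  rw [A, B]
  have D : altS (fun y : Fin (k + 2) → Vn n => (k + 1) •
    Matrix.trace ((Jac (y 0) * Jac (y 1) + mact (y 0) (Jac (y 1))) *
      (List.ofFn (fun l : Fin k => Jac (y l.succ.succ))).prod)) x = (k + 1) • altS (EE 0) x := by
    have e := altS_even hk x
    rw [← add_zero (altS (EE 0) x), ← e, ← altS_add]
    unfold altS
    rw [Finset.smul_sum]
    refine Finset.sum_congr rfl fun σ _ => ?_
    rw [smul_comm]
    congr 2
    rw [add_mul, Matrix.trace_add, add_comm]
    simp [EE, List.ofFn_succ, mul_assoc]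
  rw [D, add_neg_cancel]

/-- aᵢ is a cocycle: d_CE aᵢ = 0 in C^{2i}(vect(n); O). -/
theorem stmt8 (n : ℕ) (i : ℕ) (hi : 1 ≤ i) :
    dCEO (n := n) (aCochain i) = 0 := by
  obtain ⟨l, rfl⟩ : ∃ l, i = l + 1 := ⟨i - 1, by omega⟩
  exact main_even (n := n) (k := 2 * l) ⟨l, by ring⟩
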